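/- Let T^m = {x ∈ ℝ^m : x₁ > 0, …, x_m > 0, |x| < 1} with |x| := x₁ + ⋯ + x_m be the open simplex, let κ₁, …, κ_{m+1} > −1/2, let μ be the measure on T^m with density ∏_{i=1}^m x_i^{κ_i − 1/2} (1 − |x|)^{κ_{m+1} − 1/2} with respect to Lebesgue measure, and define ρ(x, y) := arccos( Σ_{i=1}^m (x_i y_i)^{1/2} + (1 − |x|)^{1/2} (1 − |y|)^{1/2} ). Then there exists a constant c > 1, depending only on m and κ₁, …, κ_{m+1}, such that for every x ∈ T^m and every 0 < r ≤ 1, c^{−1} r^m (1 − |x| + r²)^{κ_{m+1}} ∏_{i=1}^m (x_i + r²)^{κ_i} ≤ μ({y ∈ T^m : ρ(x, y) < r}) ≤ c r^m (1 − |x| + r²)^{κ_{m+1}} ∏_{i=1}^m (x_i + r²)^{κ_i}. -/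

import Mathlib

/-!
The map `y ↦ (√y₁, …, √y_m, √(1 - |y|))` carries the simplex to the positive part of the unit
sphere and `ρ` to the geodesic distance. Geodesic and chordal distance are comparable, so for
`r ≤ 1` the ball `ρ(x, y) < r` lies between the sets where the squared chordal distance
`chordSq x y` is less than `r² / 4` and less than `r²`; up to constants it is described by the conditions
`|√yᵢ - √xᵢ| < r` on the `m + 1` barycentric coordinates.

In one variable, the integral of `t ^ (κ - 1/2)` over `|√t - √x| < s` is comparable to
`s (x + s²) ^ κ` (`lintegral_sqrtInterval_le`, `le_lintegral_sqrtInterval`). The `m + 1`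
coordinates are tied by the relation that they sum to one, but some coordinate is at least
`1 / (m + 1)`. If it is the last one, the corresponding factor of the density is comparable to a
constant, the other `m` coordinates can be treated as independent, and both bounds follow from
Tonelli's theorem:
* for the upper bound it is the point `y` whose last coordinate is large (`measure_inter_le`);
* for the lower bound it is the centre `x`, and a box of side comparable to `r` in the
  variables `√yᵢ` fits in the ball, since the last coordinate then moves by only `O(r)` and stays away from zero
  (`mem_simplexBall_of_forall_mem_sqrtInterval`, `le_measure_simplexBall`).

The case where another coordinate is large reduces to this one by exchanging it with the last
coordinate, a volume-preserving involution of the simplex that permutes the exponents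
(`measurePreserving_swapLast`, `weightedSimplexMeasure_swapLast`).
-/

open MeasureTheory Set
open scoped ENNReal BigOperators

/-- The open simplex `T^m = {x ∈ ℝ^m : xᵢ > 0, x₁ + ⋯ + x_m < 1}`. -/
def openSimplex (m : ℕ) : Set (Fin m → ℝ) :=
  {x | (∀ i, 0 < x i) ∧ ∑ i, x i < 1}

/-- The weighted measure on the simplex with density
`∏ᵢ xᵢ^{κᵢ - 1/2} (1 - |x|)^{κ_{m+1} - 1/2}` with respect to Lebesgue measure. -/
noncomputable def weightedSimplexMeasure (m : ℕ) (κ : Fin m → ℝ) (κlast : ℝ) :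
    Measure (Fin m → ℝ) :=
  (volume.restrict (openSimplex m)).withDensity
    (fun x => ENNReal.ofReal
      ((∏ i, (x i) ^ (κ i - 1 / 2)) * (1 - ∑ i, x i) ^ (κlast - 1 / 2)))

/-- The distance `ρ(x,y) = arccos(Σᵢ √(xᵢ yᵢ) + √(1-|x|) √(1-|y|))` on the simplex. -/
noncomputable def simplexDist {m : ℕ} (x y : Fin m → ℝ) : ℝ :=
  Real.arccos (∑ i, Real.sqrt (x i * y i) +
    Real.sqrt (1 - ∑ i, x i) * Real.sqrt (1 - ∑ i, y i))

/-! ### One-dimensional and product integrals -/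

/-- If `p` and `q` agree up to a factor `A`, their `κ`-th powers agree up to `A ^ |κ|`,
whatever the sign of `κ`. -/
lemma rpow_le_of_comparable {A p q : ℝ} (κ : ℝ) (hA : 1 ≤ A) (hp : 0 < p) (hq : 0 < q)
    (hpq : p ≤ A * q) (hqp : q ≤ A * p) : p ^ κ ≤ A ^ |κ| * q ^ κ := by
  have hA0 : 0 < A := by linarith
  rcases le_or_gt 0 κ with h | h
  · rw [abs_of_nonneg h, ← Real.mul_rpow hA0.le hq.le]
    exact Real.rpow_le_rpow hp.le hpq h
  · rw [abs_of_neg h, Real.rpow_neg hA0.le, ← Real.inv_rpow hA0.le,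
      ← Real.mul_rpow (inv_nonneg.2 hA0.le) hq.le]
    apply Real.rpow_le_rpow_of_nonpos (by positivity) _ h.le
    rw [inv_mul_le_iff₀ hA0]
    exact hqp

/-- Tonelli's theorem for a product of functions of the single coordinates. -/
lemma lintegral_fin_prod {m : ℕ} (g : Fin m → ℝ → ℝ≥0∞) (hg : ∀ i, Measurable (g i)) :
    ∫⁻ y : Fin m → ℝ, ∏ i, g i (y i) = ∏ i, ∫⁻ t, g i t := by
  induction m with
  | zero => simp [lintegral_unique, volume_pi]
  | succ m ih =>
    have e := (volume_preserving_piFinSuccAbove (fun _ : Fin (m + 1) => ℝ) 0).symm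
    rw [← e.lintegral_comp (by fun_prop)]
    simp only [Fin.prod_univ_succ, MeasurableEquiv.piFinSuccAbove_symm_apply,
      Fin.insertNthEquiv_zero, Fin.consEquiv_apply, Fin.cons_zero, Fin.cons_succ]
    rw [← ih _ (fun i => hg i.succ)]
    exact lintegral_prod_mul (hg 0).aemeasurable
      (Finset.measurable_prod Finset.univ
        fun (i : Fin m) _ => (hg i.succ).comp (measurable_pi_apply i)).aemeasurable

/-- The points `t > 0` whose square root lies within `s` of `√x`. -/
def sqrtInterval (x s : ℝ) : Set ℝ := {t | 0 < t ∧ |√t - √x| < s}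

lemma measurableSet_sqrtInterval (x s : ℝ) : MeasurableSet (sqrtInterval x s) := by
  apply IsOpen.measurableSet
  exact (isOpen_lt continuous_const continuous_id).inter
    (isOpen_lt (f := fun t => |√t - √x|) (by fun_prop) continuous_const)

/-- The hypothesis `κ > -1/2` is needed only when the interval reaches the singularity at `0`,
that is for `√x < 2s`; otherwise the integrand is comparable to a constant. -/
lemma lintegral_sqrtInterval_le {κ : ℝ} (hκ : -1 / 2 < κ) :
    ∃ C : ℝ, 0 < C ∧ ∀ x s : ℝ, 0 ≤ x → 0 < s →
      ∫⁻ t in sqrtInterval x s, ENNReal.ofReal (t ^ (κ - 1 / 2)) ≤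
        ENNReal.ofReal (C * (s * (x + s ^ 2) ^ κ)) := by
  have hκ' : 0 < κ + 1 / 2 := by linarith
  refine ⟨4 * 5 ^ |κ - 1 / 2| + 3 * 2 ^ |κ| / (κ + 1 / 2), by positivity, fun x s hx hs => ?_⟩
  obtain ⟨a, ha, rfl⟩ : ∃ a : ℝ, 0 ≤ a ∧ a ^ 2 = x := ⟨√x, Real.sqrt_nonneg x, Real.sq_sqrt hx⟩
  have hP : 0 < a ^ 2 + s ^ 2 := by positivity
  have hX : 0 ≤ s * (a ^ 2 + s ^ 2) ^ κ := by positivity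
  -- either the interval avoids `0` and the integrand is nearly constant, or it is contained
  -- in `(0, (a + s)²]` with `a + s ≤ 3 s` and the integral over the latter is explicit
  rcases le_or_gt (2 * s) a with h | h
  · have hsub : sqrtInterval (a ^ 2) s ⊆ Ioo ((a - s) ^ 2) ((a + s) ^ 2) := by
      rintro t ⟨ht, h2⟩
      rw [Real.sqrt_sq ha, abs_lt] at h2
      have := Real.sq_sqrt ht.le
      constructor <;> nlinarith [Real.sqrt_nonneg t]
    calc ∫⁻ t in sqrtInterval (a ^ 2) s, ENNReal.ofReal (t ^ (κ - 1 / 2))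
        ≤ ∫⁻ t in Ioo ((a - s) ^ 2) ((a + s) ^ 2), ENNReal.ofReal (t ^ (κ - 1 / 2)) :=
          lintegral_mono_set hsub
      _ ≤ ∫⁻ t in Ioo ((a - s) ^ 2) ((a + s) ^ 2),
            ENNReal.ofReal (5 ^ |κ - 1 / 2| * (a ^ 2 + s ^ 2) ^ (κ - 1 / 2)) := by
          apply setLIntegral_mono measurable_const
          intro t ht
          apply ENNReal.ofReal_le_ofReal
          have h1 : a ^ 2 / 4 ≤ (a - s) ^ 2 := by nlinarith
          have h2 : 0 < a ^ 2 := by nlinarith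
          have h3 : s ^ 2 ≤ a ^ 2 / 4 := by nlinarith
          apply rpow_le_of_comparable _ (by norm_num) (by linarith [ht.1]) hP
          · nlinarith [ht.2]
          · nlinarith [ht.1]
      _ = ENNReal.ofReal (5 ^ |κ - 1 / 2| * (a ^ 2 + s ^ 2) ^ (κ - 1 / 2) * (4 * a * s)) := by
          rw [setLIntegral_const, Real.volume_Ioo, ← ENNReal.ofReal_mul (by positivity)]
          congr 2
          ring
      _ ≤ _ := by
          apply ENNReal.ofReal_le_ofReal
          have h1 : (a ^ 2 + s ^ 2) ^ (κ - 1 / 2) * a ≤ (a ^ 2 + s ^ 2) ^ κ := by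
            rw [Real.rpow_sub hP, ← Real.sqrt_eq_rpow, div_mul_eq_mul_div,
              div_le_iff₀ (by positivity)]
            gcongr
            exact Real.le_sqrt_of_sq_le (by nlinarith)
          calc _ = 4 * 5 ^ |κ - 1 / 2| * (s * ((a ^ 2 + s ^ 2) ^ (κ - 1 / 2) * a)) := by ring
            _ ≤ 4 * 5 ^ |κ - 1 / 2| * (s * ((a ^ 2 + s ^ 2) ^ κ)) := by gcongr
            _ ≤ _ := by
              apply mul_le_mul_of_nonneg_right _ hX
              have : 0 ≤ 3 * 2 ^ |κ| / (κ + 1 / 2) := by positivity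
              linarith
  · have hsub : sqrtInterval (a ^ 2) s ⊆ Ioc 0 ((a + s) ^ 2) := by
      rintro t ⟨ht, h2⟩
      rw [Real.sqrt_sq ha, abs_lt] at h2
      have := Real.sq_sqrt ht.le
      refine ⟨ht, ?_⟩
      nlinarith [Real.sqrt_nonneg t]
    have hb : 0 < (a + s) ^ 2 := by positivity
    have hint := intervalIntegral.intervalIntegrable_rpow' (a := 0) (b := (a + s) ^ 2)
      (r := κ - 1 / 2) (by linarith)
    rw [intervalIntegrable_iff_integrableOn_Ioc_of_le hb.le] at hint
    calc ∫⁻ t in sqrtInterval (a ^ 2) s, ENNReal.ofReal (t ^ (κ - 1 / 2))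
        ≤ ∫⁻ t in Ioc 0 ((a + s) ^ 2), ENNReal.ofReal (t ^ (κ - 1 / 2)) :=
          lintegral_mono_set hsub
      _ = ENNReal.ofReal (((a + s) ^ 2) ^ (κ + 1 / 2) / (κ + 1 / 2)) := by
          rw [← ofReal_integral_eq_lintegral_ofReal hint,
            ← intervalIntegral.integral_of_le hb.le, integral_rpow (Or.inl (by linarith)),
            show κ - 1 / 2 + 1 = κ + 1 / 2 by ring, Real.zero_rpow hκ'.ne', sub_zero]
          refine (ae_restrict_iff' measurableSet_Ioc).2 (ae_of_all _ fun t ht => ?_)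
          exact Real.rpow_nonneg ht.1.le _
      _ ≤ _ := by
          apply ENNReal.ofReal_le_ofReal
          have h1 : ((a + s) ^ 2) ^ κ ≤ 2 ^ |κ| * (a ^ 2 + s ^ 2) ^ κ := by
            apply rpow_le_of_comparable _ (by norm_num) hb hP
            · nlinarith [sq_nonneg (a - s)]
            · nlinarith [mul_nonneg ha hs.le]
          have h2 : ((a + s) ^ 2) ^ (κ + 1 / 2) = ((a + s) ^ 2) ^ κ * (a + s) := by
            rw [Real.rpow_add hb, ← Real.sqrt_eq_rpow, Real.sqrt_sq (by positivity)]
          rw [h2]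
          calc ((a + s) ^ 2) ^ κ * (a + s) / (κ + 1 / 2)
              ≤ (2 ^ |κ| * (a ^ 2 + s ^ 2) ^ κ) * (3 * s) / (κ + 1 / 2) := by
                gcongr
                linarith
            _ = 3 * 2 ^ |κ| / (κ + 1 / 2) * (s * (a ^ 2 + s ^ 2) ^ κ) := by ring
            _ ≤ _ := by
              apply mul_le_mul_of_nonneg_right _ hX
              have : (0 : ℝ) ≤ 4 * 5 ^ |κ - 1 / 2| := by positivity
              linarith

/-- It suffices to integrate over the part where `√x + s/2 < √t < √x + s`: it stays away
from `0`, and there `t` is comparable to `x + s²`. -/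
lemma le_lintegral_sqrtInterval (κ : ℝ) :
    ∃ c : ℝ, 0 < c ∧ ∀ x s : ℝ, 0 ≤ x → 0 < s →
      ENNReal.ofReal (c * (s * (x + s ^ 2) ^ κ)) ≤
        ∫⁻ t in sqrtInterval x s, ENNReal.ofReal (t ^ (κ - 1 / 2)) := by
  refine ⟨2⁻¹ * (4 ^ |κ - 1 / 2|)⁻¹, by positivity, fun x s hx hs => ?_⟩
  obtain ⟨a, ha, rfl⟩ : ∃ a : ℝ, 0 ≤ a ∧ a ^ 2 = x := ⟨√x, Real.sqrt_nonneg x, Real.sq_sqrt hx⟩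
  have hP : 0 < a ^ 2 + s ^ 2 := by positivity
  have hsub : Ioo ((a + s / 2) ^ 2) ((a + s) ^ 2) ⊆ sqrtInterval (a ^ 2) s := by
    rintro t ⟨h1, h2⟩
    have ht : 0 < t := lt_of_le_of_lt (by positivity) h1
    refine ⟨ht, ?_⟩
    have h3 : a + s / 2 < √t := Real.lt_sqrt_of_sq_lt h1
    have h4 : √t < a + s := (Real.sqrt_lt' (by positivity)).2 h2
    rw [Real.sqrt_sq ha, abs_lt]
    constructor <;> linarith
  have hsq : √(a ^ 2 + s ^ 2) ≤ a + s := Real.sqrt_le_iff.2 ⟨by positivity, by nlinarith⟩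
  calc ENNReal.ofReal (2⁻¹ * (4 ^ |κ - 1 / 2|)⁻¹ * (s * (a ^ 2 + s ^ 2) ^ κ))
      ≤ ENNReal.ofReal ((4 ^ |κ - 1 / 2|)⁻¹ * (a ^ 2 + s ^ 2) ^ (κ - 1 / 2) *
          ((a + s) ^ 2 - (a + s / 2) ^ 2)) := by
        apply ENNReal.ofReal_le_ofReal
        have h1 : (a ^ 2 + s ^ 2) ^ κ = (a ^ 2 + s ^ 2) ^ (κ - 1 / 2) * √(a ^ 2 + s ^ 2) := by
          rw [Real.sqrt_eq_rpow, ← Real.rpow_add hP]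
          congr 1
          ring
        rw [h1]
        calc _ = (4 ^ |κ - 1 / 2|)⁻¹ * (a ^ 2 + s ^ 2) ^ (κ - 1 / 2) *
              (s * √(a ^ 2 + s ^ 2) / 2) := by ring
          _ ≤ _ := by
            gcongr
            nlinarith
    _ = ∫⁻ t in Ioo ((a + s / 2) ^ 2) ((a + s) ^ 2),
          ENNReal.ofReal ((4 ^ |κ - 1 / 2|)⁻¹ * (a ^ 2 + s ^ 2) ^ (κ - 1 / 2)) := by
        rw [setLIntegral_const, Real.volume_Ioo, ← ENNReal.ofReal_mul (by positivity)]
    _ ≤ ∫⁻ t in Ioo ((a + s / 2) ^ 2) ((a + s) ^ 2), ENNReal.ofReal (t ^ (κ - 1 / 2)) := by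
        apply setLIntegral_mono (by fun_prop)
        intro t ht
        apply ENNReal.ofReal_le_ofReal
        rw [inv_mul_le_iff₀ (by positivity)]
        apply rpow_le_of_comparable _ (by norm_num) hP (lt_of_le_of_lt (by positivity) ht.1)
        · nlinarith [ht.1]
        · nlinarith [ht.2, sq_nonneg (a - s)]
    _ ≤ _ := lintegral_mono_set hsub

/-! ### Balls and the chordal distance -/

/-- The squared chordal distance between the points of the unit sphere with coordinates
`√xᵢ, √(1 - |x|)` and `√yᵢ, √(1 - |y|)`. -/
noncomputable def chordSq {m : ℕ} (x y : Fin m → ℝ) : ℝ :=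
  ∑ i, (√(x i) - √(y i)) ^ 2 + (√(1 - ∑ i, x i) - √(1 - ∑ i, y i)) ^ 2

/-- The balls `{y ∈ T^m : ρ(x, y) < r}`. -/
def simplexBall {m : ℕ} (x : Fin m → ℝ) (r : ℝ) : Set (Fin m → ℝ) :=
  {y ∈ openSimplex m | simplexDist x y < r}

/-- The two-sided model `r^m (1 - |x| + r²)^{κ_{m+1}} ∏ᵢ (xᵢ + r²)^{κᵢ}` for the measure of a
ball. -/
noncomputable def ballSize {m : ℕ} (κ : Fin m → ℝ) (κlast : ℝ) (x : Fin m → ℝ) (r : ℝ) : ℝ :=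
  r ^ m * (1 - ∑ i, x i + r ^ 2) ^ κlast * ∏ i, (x i + r ^ 2) ^ (κ i)

lemma ballSize_pos {m : ℕ} (κ : Fin m → ℝ) (κlast : ℝ) {x : Fin m → ℝ} (hx : x ∈ openSimplex m)
    {r : ℝ} (hr : 0 < r) : 0 < ballSize κ κlast x r := by
  have h1 : 0 < 1 - ∑ i, x i + r ^ 2 := by nlinarith [hx.2]
  have h2 : ∀ i, 0 < x i + r ^ 2 := fun i => by nlinarith [hx.1 i]
  have h3 : 0 < ∏ i, (x i + r ^ 2) ^ (κ i) :=
    Finset.prod_pos fun i _ => Real.rpow_pos_of_pos (h2 i) _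
  unfold ballSize
  positivity

lemma measurableSet_openSimplex (m : ℕ) : MeasurableSet (openSimplex m) := by
  have h : openSimplex m = (⋂ i, {x : Fin m → ℝ | 0 < x i}) ∩ {x | ∑ i, x i < 1} := by
    ext x
    simp [openSimplex]
  rw [h]
  exact (MeasurableSet.iInter fun i => measurableSet_lt measurable_const (by fun_prop)).inter
    (measurableSet_lt (by fun_prop) measurable_const)

lemma measurableSet_simplexBall {m : ℕ} (x : Fin m → ℝ) (r : ℝ) :
    MeasurableSet (simplexBall x r) := by
  have h : Measurable (fun y : Fin m → ℝ => simplexDist x y) := by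
    unfold simplexDist
    exact Real.continuous_arccos.measurable.comp (by fun_prop)
  exact (measurableSet_openSimplex m).inter (measurableSet_lt h measurable_const)

lemma chordSq_eq {m : ℕ} {x y : Fin m → ℝ} (hx : x ∈ openSimplex m) (hy : y ∈ openSimplex m) :
    chordSq x y = 2 - 2 * (∑ i, √(x i * y i) + √(1 - ∑ i, x i) * √(1 - ∑ i, y i)) := by
  have h1 : ∀ i, (√(x i) - √(y i)) ^ 2 = x i + y i - 2 * √(x i * y i) := fun i => by
    rw [Real.sqrt_mul (hx.1 i).le, sub_sq, Real.sq_sqrt (hx.1 i).le, Real.sq_sqrt (hy.1 i).le]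
    ring
  unfold chordSq
  simp only [h1, Finset.sum_sub_distrib, Finset.sum_add_distrib, ← Finset.mul_sum]
  rw [sub_sq, Real.sq_sqrt (by linarith [hx.2]), Real.sq_sqrt (by linarith [hy.2])]
  ring

lemma chordSq_nonneg {m : ℕ} (x y : Fin m → ℝ) : 0 ≤ chordSq x y :=
  add_nonneg (Finset.sum_nonneg fun _ _ => sq_nonneg _) (sq_nonneg _)

/-- The argument of `arccos` in the definition of `ρ` lies in `[0, 1]`, so `cos` undoes it. -/
lemma cos_simplexDist {m : ℕ} {x y : Fin m → ℝ} (hx : x ∈ openSimplex m)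
    (hy : y ∈ openSimplex m) : Real.cos (simplexDist x y) = 1 - chordSq x y / 2 := by
  have h0 : 0 ≤ ∑ i, √(x i * y i) + √(1 - ∑ i, x i) * √(1 - ∑ i, y i) :=
    add_nonneg (Finset.sum_nonneg fun _ _ => Real.sqrt_nonneg _) (by positivity)
  have h1 := chordSq_eq hx hy
  have h2 := chordSq_nonneg x y
  unfold simplexDist
  rw [Real.cos_arccos (by linarith) (by linarith)]
  linarith

lemma chordSq_lt_of_simplexDist_lt {m : ℕ} {x y : Fin m → ℝ} (hx : x ∈ openSimplex m)
    (hy : y ∈ openSimplex m) {r : ℝ} (hr : r ≤ 1) (h : simplexDist x y < r) :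
    chordSq x y < r ^ 2 := by
  have h1 : Real.cos r < Real.cos (simplexDist x y) :=
    Real.cos_lt_cos_of_nonneg_of_le_pi (Real.arccos_nonneg _) (by linarith [Real.pi_gt_three]) h
  rw [cos_simplexDist hx hy] at h1
  linarith [Real.one_sub_sq_div_two_le_cos (x := r)]

lemma simplexDist_lt_of_chordSq_lt {m : ℕ} {x y : Fin m → ℝ} (hx : x ∈ openSimplex m)
    (hy : y ∈ openSimplex m) {r : ℝ} (hr0 : 0 < r) (hr : r ≤ 1) (h : chordSq x y < r ^ 2 / 4) :
    simplexDist x y < r := by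
  by_contra! hc
  have h1 : Real.cos (simplexDist x y) ≤ Real.cos r :=
    Real.cos_le_cos_of_nonneg_of_le_pi hr0.le (Real.arccos_le_pi _) hc
  rw [cos_simplexDist hx hy] at h1
  have h3 : Real.cos r ≤ 1 - 2 / Real.pi ^ 2 * r ^ 2 := Real.cos_le_one_sub_mul_cos_sq
    (by rw [abs_of_pos hr0]; linarith [Real.pi_gt_three])
  have h4 : 1 / 8 ≤ 2 / Real.pi ^ 2 := by
    rw [div_le_div_iff₀ (by norm_num) (by positivity)]
    nlinarith [Real.pi_le_four, Real.pi_pos]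
  nlinarith [sq_nonneg r]

lemma abs_sqrt_sub_lt_of_chordSq_lt {m : ℕ} {x y : Fin m → ℝ} {r : ℝ} (hr : 0 < r)
    (h : chordSq x y < r ^ 2) (i : Fin m) : |√(y i) - √(x i)| < r := by
  rw [abs_sub_comm]
  apply abs_lt_of_sq_lt_sq _ hr.le
  refine lt_of_le_of_lt ?_ h
  have := Finset.single_le_sum (f := fun i => (√(x i) - √(y i)) ^ 2)
    (fun _ _ => sq_nonneg _) (Finset.mem_univ i)
  unfold chordSq
  linarith [sq_nonneg (√(1 - ∑ i, x i) - √(1 - ∑ i, y i))]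

lemma abs_sqrt_last_sub_lt_of_chordSq_lt {m : ℕ} {x y : Fin m → ℝ} {r : ℝ} (hr : 0 < r)
    (h : chordSq x y < r ^ 2) : |√(1 - ∑ i, y i) - √(1 - ∑ i, x i)| < r := by
  rw [abs_sub_comm]
  apply abs_lt_of_sq_lt_sq _ hr.le
  refine lt_of_le_of_lt ?_ h
  have := Finset.sum_nonneg (s := Finset.univ) (f := fun i => (√(x i) - √(y i)) ^ 2)
    (fun _ _ => sq_nonneg _)
  unfold chordSq
  linarith

/-! ### Exchanging two barycentric coordinates -/

lemma weightedSimplexMeasure_apply {m : ℕ} (κ : Fin m → ℝ) (κlast : ℝ) {S : Set (Fin m → ℝ)}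
    (hS : MeasurableSet S) (hsub : S ⊆ openSimplex m) :
    weightedSimplexMeasure m κ κlast S = ∫⁻ y in S, ENNReal.ofReal
      ((∏ i, (y i) ^ (κ i - 1 / 2)) * (1 - ∑ i, y i) ^ (κlast - 1 / 2)) := by
  unfold weightedSimplexMeasure
  rw [withDensity_apply _ hS, Measure.restrict_restrict hS, inter_eq_left.2 hsub]

/-- Exchanges the `j`-th barycentric coordinate with the last one, `1 - |y|`. -/
def swapLast {m : ℕ} (j : Fin m) (y : Fin m → ℝ) : Fin m → ℝ :=
  Function.update y j (1 - ∑ i, y i)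

lemma swapLast_same {m : ℕ} (j : Fin m) (y : Fin m → ℝ) : swapLast j y j = 1 - ∑ i, y i := by
  simp [swapLast]

lemma swapLast_of_ne {m : ℕ} {i j : Fin m} (h : i ≠ j) (y : Fin m → ℝ) :
    swapLast j y i = y i := by
  simp [swapLast, h]

lemma one_sub_sum_swapLast {m : ℕ} (j : Fin m) (y : Fin m → ℝ) :
    1 - ∑ i, swapLast j y i = y j := by
  have h : ∑ i ∈ {j}ᶜ, swapLast j y i = ∑ i ∈ {j}ᶜ, y i :=
    Finset.sum_congr rfl fun i hi => swapLast_of_ne (by simpa using hi) y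
  rw [Fintype.sum_eq_add_sum_compl j, h, swapLast_same, Fintype.sum_eq_add_sum_compl j]
  ring

lemma swapLast_swapLast {m : ℕ} (j : Fin m) (y : Fin m → ℝ) :
    swapLast j (swapLast j y) = y := by
  ext i
  by_cases h : i = j
  · subst h
    rw [swapLast_same, one_sub_sum_swapLast]
  · rw [swapLast_of_ne h, swapLast_of_ne h]

lemma swapLast_mem {m : ℕ} (j : Fin m) {y : Fin m → ℝ} (hy : y ∈ openSimplex m) :
    swapLast j y ∈ openSimplex m := by
  refine ⟨fun i => ?_, ?_⟩
  · by_cases h : i = j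
    · subst h
      rw [swapLast_same]
      linarith [hy.2]
    · rw [swapLast_of_ne h]
      exact hy.1 i
  · linarith [one_sub_sum_swapLast j y, hy.1 j]

lemma swapLast_mem_iff {m : ℕ} (j : Fin m) {y : Fin m → ℝ} :
    swapLast j y ∈ openSimplex m ↔ y ∈ openSimplex m :=
  ⟨fun h => swapLast_swapLast j y ▸ swapLast_mem j h, swapLast_mem j⟩

/-- A product over all `m + 1` barycentric coordinates is unchanged when coordinates and
exponents are permuted alike. -/
lemma prod_swapLast {m : ℕ} (f : ℝ → ℝ → ℝ) (κ : Fin m → ℝ) (κlast : ℝ) (j : Fin m)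
    (y : Fin m → ℝ) :
    (∏ i, f (κ i) (swapLast j y i)) * f κlast (1 - ∑ i, swapLast j y i) =
      (∏ i, f (Function.update κ j κlast i) (y i)) * f (κ j) (1 - ∑ i, y i) := by
  have h : ∏ i ∈ {j}ᶜ, f (κ i) (swapLast j y i) =
      ∏ i ∈ {j}ᶜ, f (Function.update κ j κlast i) (y i) :=
    Finset.prod_congr rfl fun i hi => by
      have hi : i ≠ j := by simpa using hi
      rw [swapLast_of_ne hi, Function.update_of_ne hi]
  rw [one_sub_sum_swapLast, Fintype.prod_eq_mul_prod_compl j, h, swapLast_same,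
    Fintype.prod_eq_mul_prod_compl j (fun i => f (Function.update κ j κlast i) (y i)),
    Function.update_self]
  ring

lemma ballSize_swapLast {m : ℕ} (κ : Fin m → ℝ) (κlast : ℝ) (j : Fin m) (x : Fin m → ℝ) (r : ℝ) :
    ballSize (Function.update κ j κlast) (κ j) (swapLast j x) r = ballSize κ κlast x r := by
  have h := prod_swapLast (fun k t => (t + r ^ 2) ^ k) κ κlast j (swapLast j x)
  simp only [swapLast_swapLast] at h
  unfold ballSize
  rw [mul_assoc, mul_assoc, mul_comm (_ ^ κ j), ← h]
  ring

lemma simplexDist_swapLast {m : ℕ} (j : Fin m) {x : Fin m → ℝ} (hx : x ∈ openSimplex m)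
    (y : Fin m → ℝ) :
    simplexDist (swapLast j x) (swapLast j y) = simplexDist x y := by
  have h : ∑ i ∈ {j}ᶜ, √(swapLast j x i * swapLast j y i) = ∑ i ∈ {j}ᶜ, √(x i * y i) :=
    Finset.sum_congr rfl fun i hi => by
      have hi : i ≠ j := by simpa using hi
      rw [swapLast_of_ne hi, swapLast_of_ne hi]
  have h0 : 0 ≤ 1 - ∑ i, x i := by linarith [hx.2]
  unfold simplexDist
  rw [one_sub_sum_swapLast, one_sub_sum_swapLast, Fintype.sum_eq_add_sum_compl j, h,
    swapLast_same, swapLast_same, Fintype.sum_eq_add_sum_compl j (fun i => √(x i * y i)),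
    Real.sqrt_mul h0, Real.sqrt_mul (hx.1 j).le]
  congr 1
  ring

lemma preimage_swapLast_simplexBall {m : ℕ} (j : Fin m) {x : Fin m → ℝ} (hx : x ∈ openSimplex m)
    (r : ℝ) : swapLast j ⁻¹' simplexBall x r = simplexBall (swapLast j x) r := by
  ext y
  simp only [simplexBall, mem_preimage, mem_ofPred_eq, swapLast_mem_iff]
  refine and_congr_right fun _ => ?_
  rw [← simplexDist_swapLast j (swapLast_mem j hx) y, swapLast_swapLast]

/-- `swapLast j` is an affine involution, so its linear part has determinant `±1`. -/
lemma measurePreserving_swapLast {m : ℕ} (j : Fin m) :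
    MeasurePreserving (swapLast j : (Fin m → ℝ) → (Fin m → ℝ)) := by
  let L : (Fin m → ℝ) →ₗ[ℝ] (Fin m → ℝ) :=
    { toFun := fun y => Function.update y j (-∑ i, y i)
      map_add' := fun y z => by
        ext i
        by_cases h : i = j
        · subst h
          simp [Finset.sum_add_distrib]
          ring
        · simp [h]
      map_smul' := fun a y => by
        ext i
        by_cases h : i = j
        · subst h
          simp [Finset.mul_sum]
        · simp [h] }
  have hS : ∀ y, swapLast j y = L y + Pi.single j 1 := fun y => by
    ext i
    by_cases h : i = j
    · subst h
      simp [swapLast, L]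
      ring
    · simp [swapLast, L, h]
  have hLL : L * L = 1 := by
    apply LinearMap.ext
    intro y
    have h0 := swapLast_swapLast j y
    have h1 := swapLast_swapLast j (0 : Fin m → ℝ)
    rw [hS, hS, map_add] at h0 h1
    simp only [map_zero, zero_add] at h1
    rw [add_assoc, h1, add_zero] at h0
    exact h0
  have hdet : |LinearMap.det L| = 1 := by
    have : LinearMap.det L * LinearMap.det L = 1 := by rw [← map_mul, hLL, map_one]
    rcases mul_self_eq_one_iff.1 this with h | h <;> simp [h]
  have hL : MeasurePreserving L := by
    refine ⟨L.continuous_of_finiteDimensional.measurable, ?_⟩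
    have h0 : LinearMap.det L ≠ 0 := fun h => by simp [h] at hdet
    rw [Real.map_linearMap_volume_pi_eq_smul_volume_pi h0, abs_inv, hdet]
    simp
  have := (measurePreserving_add_right volume (Pi.single j 1 : Fin m → ℝ)).comp hL
  rwa [show swapLast j = (fun y => y + Pi.single j 1) ∘ L from funext hS]

/-- Exchanging a coordinate with the last one amounts to exchanging their exponents. -/
lemma weightedSimplexMeasure_swapLast {m : ℕ} (κ : Fin m → ℝ) (κlast : ℝ) (j : Fin m)
    {S : Set (Fin m → ℝ)} (hS : MeasurableSet S) (hsub : S ⊆ openSimplex m) :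
    weightedSimplexMeasure m κ κlast S =
      weightedSimplexMeasure m (Function.update κ j κlast) (κ j) (swapLast j ⁻¹' S) := by
  have hT := measurePreserving_swapLast j
  rw [weightedSimplexMeasure_apply _ _ hS hsub, weightedSimplexMeasure_apply _ _
    (hT.measurable hS) (fun y hy => (swapLast_mem_iff j).1 (hsub hy)),
    ← hT.setLIntegral_comp_preimage hS (by fun_prop)]
  simp only [prod_swapLast (fun k t => t ^ (k - 1 / 2))]

/-! ### Estimates where the last coordinate is large -/

/-- The upper bound on the part of the ball where the last coordinate `1 - |y|` is at least
`1 / (m + 1)`: there the last factor of the density is comparable to a constant, so the measure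
is dominated by a product of one-dimensional integrals. -/
lemma measure_inter_le {m : ℕ} (κ : Fin m → ℝ) (κlast : ℝ) (hκ : ∀ i, -1 / 2 < κ i) :
    ∃ C : ℝ, 0 < C ∧ ∀ x ∈ openSimplex m, ∀ r : ℝ, 0 < r → r ≤ 1 →
      weightedSimplexMeasure m κ κlast
          (simplexBall x r ∩ {y | 1 / (m + 1 : ℝ) ≤ 1 - ∑ i, y i}) ≤
        ENNReal.ofReal (C * ballSize κ κlast x r) := by
  choose C hC0 hC using fun i => lintegral_sqrtInterval_le (hκ i)
  have hn : (1 : ℝ) ≤ m + 1 := by linarith [Nat.cast_nonneg (α := ℝ) m]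
  have hn0 : (0 : ℝ) < m + 1 := by linarith
  have hCpos : 0 < ∏ i, C i := Finset.prod_pos fun i _ => hC0 i
  set K : ℝ := (m + 1 : ℝ) ^ |κlast - 1 / 2| with hK
  set K' : ℝ := (2 * (m + 1 : ℝ)) ^ |κlast| with hK'
  have hK0 : 0 < K := by positivity
  have hK'0 : 0 < K' := by positivity
  refine ⟨K * K' * ∏ i, C i, by positivity, fun x hx r hr hr1 => ?_⟩
  set E := simplexBall x r ∩ {y | 1 / (m + 1 : ℝ) ≤ 1 - ∑ i, y i} with hE
  have hEm : MeasurableSet E :=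
    (measurableSet_simplexBall x r).inter (measurableSet_le measurable_const (by fun_prop))
  have hES : E ⊆ openSimplex m := fun y hy => hy.1.1
  have hxi : ∀ i, 0 < x i + r ^ 2 := fun i => by nlinarith [hx.1 i]
  -- a point `z ∈ E` forces the last coordinate of the centre to satisfy `1 - |x| + r² ≳ 1`
  rcases E.eq_empty_or_nonempty with h0 | ⟨z, hz⟩
  · simp [h0]
  have hP : 0 ≤ ∏ i, (x i + r ^ 2) ^ (κ i) :=
    Finset.prod_nonneg fun i _ => Real.rpow_nonneg (hxi i).le _
  have hxl : 1 ≤ K' * (1 - ∑ i, x i + r ^ 2) ^ κlast := by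
    have hq : 0 < 1 - ∑ i, x i + r ^ 2 := by nlinarith [hx.2]
    have h1 : 1 / (m + 1 : ℝ) ≤ 2 * (1 - ∑ i, x i + r ^ 2) := by
      have h2 := (abs_lt.1 (abs_sqrt_last_sub_lt_of_chordSq_lt hr
        (chordSq_lt_of_simplexDist_lt hx hz.1.1 hr1 hz.1.2))).2
      have h3 := Real.sq_sqrt (show 0 ≤ 1 - ∑ i, x i by linarith [hx.2])
      have h4 := Real.sq_sqrt (show 0 ≤ 1 - ∑ i, z i by linarith [hz.1.1.2])
      have h5 : 1 / (m + 1 : ℝ) ≤ 1 - ∑ i, z i := hz.2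
      nlinarith [Real.sqrt_nonneg (1 - ∑ i, z i), Real.sqrt_nonneg (1 - ∑ i, x i),
        sq_nonneg (√(1 - ∑ i, x i) - r)]
    have hs : 0 ≤ ∑ i, x i := Finset.sum_nonneg fun i _ => (hx.1 i).le
    have := rpow_le_of_comparable (A := 2 * (m + 1)) κlast (by linarith) one_pos hq
      (by rw [div_le_iff₀ hn0] at h1; linarith) (by nlinarith)
    rwa [Real.one_rpow] at this
  rw [weightedSimplexMeasure_apply _ _ hEm hES]
  let g : Fin m → ℝ → ℝ≥0∞ := fun i =>
    (sqrtInterval (x i) r).indicator fun t => ENNReal.ofReal (t ^ (κ i - 1 / 2))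
  have hg : ∀ i, Measurable (g i) := fun i =>
    Measurable.indicator (by fun_prop) (measurableSet_sqrtInterval _ _)
  calc ∫⁻ y in E, ENNReal.ofReal
        ((∏ i, (y i) ^ (κ i - 1 / 2)) * (1 - ∑ i, y i) ^ (κlast - 1 / 2))
      ≤ ∫⁻ y in E, ENNReal.ofReal K * ∏ i, g i (y i) := by
        refine setLIntegral_mono' hEm fun y hy => ?_
        have hy0 := hy.1.1
        have hd := chordSq_lt_of_simplexDist_lt hx hy.1.1 hr1 hy.1.2
        have h1 : ∏ i, g i (y i) = ENNReal.ofReal (∏ i, (y i) ^ (κ i - 1 / 2)) := by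
          rw [ENNReal.ofReal_prod_of_nonneg fun i _ => Real.rpow_nonneg (hy0.1 i).le _]
          refine Finset.prod_congr rfl fun i _ => indicator_of_mem ?_ _
          exact ⟨hy0.1 i, abs_sqrt_sub_lt_of_chordSq_lt hr hd i⟩
        rw [h1, ← ENNReal.ofReal_mul hK0.le, mul_comm]
        apply ENNReal.ofReal_le_ofReal
        apply mul_le_mul_of_nonneg_right _
          (Finset.prod_nonneg fun i _ => Real.rpow_nonneg (hy0.1 i).le _)
        have h2 : 1 / (m + 1 : ℝ) ≤ 1 - ∑ i, y i := hy.2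
        have hs : 0 ≤ ∑ i, y i := Finset.sum_nonneg fun i _ => (hy0.1 i).le
        have := rpow_le_of_comparable (A := m + 1) (κlast - 1 / 2) hn
          (show 0 < 1 - ∑ i, y i by linarith [hy0.2]) one_pos (by linarith)
          (by rwa [div_le_iff₀' hn0] at h2)
        rwa [Real.one_rpow, mul_one] at this
    _ ≤ ∫⁻ y : Fin m → ℝ, ENNReal.ofReal K * ∏ i, g i (y i) := setLIntegral_le_lintegral _ _
    _ = ENNReal.ofReal K * ∏ i, ∫⁻ t in sqrtInterval (x i) r,
          ENNReal.ofReal (t ^ (κ i - 1 / 2)) := by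
        rw [lintegral_const_mul' _ _ ENNReal.ofReal_ne_top, lintegral_fin_prod g hg]
        simp only [g, lintegral_indicator (measurableSet_sqrtInterval _ _)]
    _ ≤ ENNReal.ofReal K * ∏ i, ENNReal.ofReal (C i * (r * (x i + r ^ 2) ^ κ i)) := by
        gcongr with i
        exact hC i _ _ (hx.1 i).le hr
    _ = ENNReal.ofReal (K * ((∏ i, C i) * (r ^ m * ∏ i, (x i + r ^ 2) ^ κ i))) := by
        rw [← ENNReal.ofReal_prod_of_nonneg fun i _ => by
          have := hC0 i; have := hxi i; positivity, ← ENNReal.ofReal_mul hK0.le]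
        simp only [Finset.prod_mul_distrib, Finset.prod_const, Finset.card_univ, Fintype.card_fin]
    _ ≤ _ := by
        apply ENNReal.ofReal_le_ofReal
        unfold ballSize
        calc _ = (K * (∏ i, C i) * r ^ m * ∏ i, (x i + r ^ 2) ^ κ i) * 1 := by ring
          _ ≤ (K * (∏ i, C i) * r ^ m * ∏ i, (x i + r ^ 2) ^ κ i) *
                (K' * (1 - ∑ i, x i + r ^ 2) ^ κlast) := by gcongr
          _ = _ := by ring

/-- If the last coordinate of `x` is at least `1 / (m + 1)`, the box of points whose first `m`
square-root coordinates are within `r / (10 (m + 1)²)` of those of `x` lies in the ball, and on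
it the last coordinate stays bounded below. -/
lemma mem_simplexBall_of_forall_mem_sqrtInterval {m : ℕ} {x y : Fin m → ℝ}
    (hx : x ∈ openSimplex m) (hxl : 1 / (m + 1 : ℝ) ≤ 1 - ∑ i, x i) {r : ℝ} (hr : 0 < r)
    (hr1 : r ≤ 1) (hy : ∀ i, y i ∈ sqrtInterval (x i) (1 / (10 * (m + 1 : ℝ) ^ 2) * r)) :
    y ∈ simplexBall x r ∧ 1 / (2 * (m + 1 : ℝ)) ≤ 1 - ∑ i, y i := by
  have hn : (1 : ℝ) ≤ m + 1 := by linarith [Nat.cast_nonneg (α := ℝ) m]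
  have hmn : (m : ℝ) ≤ m + 1 := by linarith
  have hm0 : (0 : ℝ) ≤ m := Nat.cast_nonneg m
  set n : ℝ := m + 1
  have hn0 : 0 < n := by linarith
  set s : ℝ := 1 / (10 * n ^ 2) * r with hs
  have hs0 : 0 < s := by positivity
  have hsn : s * (10 * n ^ 2) = r := by rw [hs]; field_simp
  have hs1 : s ≤ 1 := by nlinarith
  have hxi1 : ∀ i, x i ≤ 1 := fun i => by
    have := Finset.single_le_sum (fun i _ => (hx.1 i).le) (Finset.mem_univ i)
    linarith [hx.2]
  have h1 : ∀ i, |y i - x i| ≤ 3 * s := fun i => by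
    obtain ⟨h, h'⟩ := hy i
    have e : y i - x i = (√(y i) - √(x i)) * (√(y i) + √(x i)) := by
      nlinarith [Real.sq_sqrt h.le, Real.sq_sqrt (hx.1 i).le]
    have hx1 : √(x i) ≤ 1 := by
      rw [← Real.sqrt_one]
      exact Real.sqrt_le_sqrt (hxi1 i)
    have hpos : 0 ≤ √(y i) + √(x i) := by positivity
    rw [e, abs_mul, abs_of_nonneg hpos]
    have := (abs_lt.1 h').2
    calc _ ≤ s * 3 := mul_le_mul h'.le (by linarith) hpos hs0.le
      _ = _ := by ring
  have h2 : |∑ i, y i - ∑ i, x i| ≤ m * (3 * s) := by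
    rw [← Finset.sum_sub_distrib]
    refine (Finset.abs_sum_le_sum_abs _ _).trans ?_
    refine (Finset.sum_le_sum fun i _ => h1 i).trans ?_
    simp
  have h3 : m * (3 * s) ≤ 1 / (2 * n) := by
    rw [le_div_iff₀ (by positivity)]
    calc m * (3 * s) * (2 * n) ≤ n * (3 * s) * (2 * n) := by gcongr
      _ ≤ s * (10 * n ^ 2) := by nlinarith [mul_pos hs0 (pow_pos hn0 2)]
      _ ≤ 1 := by linarith
  have h4 : 1 / n = 1 / (2 * n) + 1 / (2 * n) := by field_simp; norm_num
  have h5 : 1 / (2 * n) ≤ 1 - ∑ i, y i := by linarith [(abs_le.1 h2).2]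
  have h6 : 0 < 1 / (2 * n) := by positivity
  have hyS : y ∈ openSimplex m := ⟨fun i => (hy i).1, by linarith⟩
  refine ⟨⟨hyS, simplexDist_lt_of_chordSq_lt hx hyS hr hr1 ?_⟩, h5⟩
  have h7 : ∑ i, (√(x i) - √(y i)) ^ 2 ≤ m * s ^ 2 := by
    refine (Finset.sum_le_sum (g := fun _ => s ^ 2) fun i _ => ?_).trans (by simp)
    rw [← sq_abs, abs_sub_comm]
    have := (hy i).2.le
    gcongr
  have h8 : (√(1 - ∑ i, x i) - √(1 - ∑ i, y i)) ^ 2 ≤ n * (m * (3 * s)) ^ 2 := by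
    have ha := Real.sq_sqrt (show 0 ≤ 1 - ∑ i, x i by linarith [hx.2])
    have hb := Real.sq_sqrt (show 0 ≤ 1 - ∑ i, y i by linarith [hyS.2])
    have ha0 := Real.sqrt_nonneg (1 - ∑ i, x i)
    have hb0 := Real.sqrt_nonneg (1 - ∑ i, y i)
    set a := √(1 - ∑ i, x i)
    set b := √(1 - ∑ i, y i)
    have hab : (a - b) * (a + b) = ∑ i, y i - ∑ i, x i := by nlinarith
    have hab2 : ((a - b) * (a + b)) ^ 2 ≤ (m * (3 * s)) ^ 2 := by
      rw [hab, ← sq_abs]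
      gcongr
    have hsum : 1 / n ≤ (a + b) ^ 2 := by nlinarith
    have hn1 : 1 ≤ n * (a + b) ^ 2 := by rwa [div_le_iff₀' hn0] at hsum
    calc (a - b) ^ 2 = (a - b) ^ 2 * 1 := by ring
      _ ≤ (a - b) ^ 2 * (n * (a + b) ^ 2) := by gcongr
      _ = n * ((a - b) * (a + b)) ^ 2 := by ring
      _ ≤ _ := by gcongr
  unfold chordSq
  have h9 : m * s ^ 2 + n * (m * (3 * s)) ^ 2 ≤ 10 * n ^ 4 * s ^ 2 := by
    have e1 : m * s ^ 2 ≤ n ^ 4 * s ^ 2 := by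
      gcongr
      exact hmn.trans (le_self_pow₀ hn (by norm_num))
    have e2 : n * (m * (3 * s)) ^ 2 ≤ 9 * n ^ 4 * s ^ 2 := by
      calc n * (m * (3 * s)) ^ 2 ≤ n * (n * (3 * s)) ^ 2 := by gcongr
        _ = 9 * n ^ 3 * s ^ 2 := by ring
        _ ≤ 9 * n ^ 4 * s ^ 2 := by
          gcongr
          norm_num
    linarith
  have hpos : 0 < n ^ 4 * s ^ 2 := by positivity
  have h10 : r ^ 2 = 100 * (n ^ 4 * s ^ 2) := by rw [← hsn]; ring
  linarith

/-- The lower bound at centres whose last coordinate `1 - |x|` is at least `1 / (m + 1)`. -/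
lemma le_measure_simplexBall {m : ℕ} (κ : Fin m → ℝ) (κlast : ℝ) :
    ∃ c : ℝ, 0 < c ∧ ∀ x ∈ openSimplex m, 1 / (m + 1 : ℝ) ≤ 1 - ∑ i, x i →
      ∀ r : ℝ, 0 < r → r ≤ 1 →
        ENNReal.ofReal (c * ballSize κ κlast x r) ≤
          weightedSimplexMeasure m κ κlast (simplexBall x r) := by
  choose C hC0 hC using fun i => le_lintegral_sqrtInterval (κ i)
  have hn : (1 : ℝ) ≤ m + 1 := by linarith [Nat.cast_nonneg (α := ℝ) m]
  have hn0 : (0 : ℝ) < m + 1 := by linarith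
  set ε : ℝ := 1 / (10 * (m + 1 : ℝ) ^ 2) with hε
  have hε0 : 0 < ε := by positivity
  have hε1 : ε ≤ 1 := by
    rw [hε, div_le_one (by positivity)]
    nlinarith
  set K : ℝ := (2 * (m + 1 : ℝ)) ^ |κlast - 1 / 2|
  set K' : ℝ := (2 * (m + 1 : ℝ)) ^ |κlast|
  have hK0 : 0 < K := by positivity
  have hK'0 : 0 < K' := by positivity
  -- the last factor of `D i` is the cost of replacing `x i + (ε r)²` by `x i + r²`
  let D : Fin m → ℝ := fun i => C i * ε * (((ε ^ 2)⁻¹) ^ |κ i|)⁻¹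
  have hD0 : ∀ i, 0 < D i := fun i => by
    have := hC0 i
    positivity
  have hDpos : 0 < ∏ i, D i := Finset.prod_pos fun i _ => hD0 i
  refine ⟨K⁻¹ * K'⁻¹ * ∏ i, D i, by positivity, fun x hx hxl r hr hr1 => ?_⟩
  have hxi : ∀ i, 0 < x i + r ^ 2 := fun i => by nlinarith [hx.1 i]
  have hxi' : ∀ i, 0 < x i + (ε * r) ^ 2 := fun i => by nlinarith [hx.1 i]
  have hP : 0 ≤ ∏ i, (x i + r ^ 2) ^ (κ i) :=
    Finset.prod_nonneg fun i _ => Real.rpow_nonneg (hxi i).le _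
  have hxl' : K'⁻¹ * (1 - ∑ i, x i + r ^ 2) ^ κlast ≤ 1 := by
    have hs : 0 ≤ ∑ i, x i := Finset.sum_nonneg fun i _ => (hx.1 i).le
    have hq : 1 / (m + 1 : ℝ) ≤ 1 - ∑ i, x i + r ^ 2 := by nlinarith
    have hq0 : 0 < 1 - ∑ i, x i + r ^ 2 := lt_of_lt_of_le (by positivity) hq
    have := rpow_le_of_comparable (A := 2 * (m + 1)) κlast (by linarith) hq0 one_pos
      (by nlinarith) (by rw [div_le_iff₀ hn0] at hq; linarith)
    rw [Real.one_rpow, mul_one] at this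
    rwa [inv_mul_le_iff₀ hK'0, mul_one]
  have hBm := measurableSet_simplexBall x r
  rw [weightedSimplexMeasure_apply _ _ hBm (fun y hy => hy.1)]
  let g : Fin m → ℝ → ℝ≥0∞ := fun i =>
    (sqrtInterval (x i) (ε * r)).indicator fun t => ENNReal.ofReal (t ^ (κ i - 1 / 2))
  have hg : ∀ i, Measurable (g i) := fun i =>
    Measurable.indicator (by fun_prop) (measurableSet_sqrtInterval _ _)
  calc ENNReal.ofReal (K⁻¹ * K'⁻¹ * (∏ i, D i) * ballSize κ κlast x r)
      ≤ ENNReal.ofReal (K⁻¹ * ∏ i, (D i * (r * (x i + r ^ 2) ^ κ i))) := by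
        apply ENNReal.ofReal_le_ofReal
        simp only [Finset.prod_mul_distrib, Finset.prod_const, Finset.card_univ, Fintype.card_fin]
        unfold ballSize
        calc _ = (K⁻¹ * (∏ i, D i) * r ^ m * ∏ i, (x i + r ^ 2) ^ κ i) *
                (K'⁻¹ * (1 - ∑ i, x i + r ^ 2) ^ κlast) := by ring
          _ ≤ (K⁻¹ * (∏ i, D i) * r ^ m * ∏ i, (x i + r ^ 2) ^ κ i) * 1 := by gcongr
          _ = _ := by ring
    _ = ENNReal.ofReal K⁻¹ * ∏ i, ENNReal.ofReal (D i * (r * (x i + r ^ 2) ^ κ i)) := by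
        rw [ENNReal.ofReal_mul (by positivity), ENNReal.ofReal_prod_of_nonneg fun i _ => by
          have := hD0 i; have := hxi i; positivity]
    _ ≤ ENNReal.ofReal K⁻¹ * ∏ i, ∫⁻ t in sqrtInterval (x i) (ε * r),
          ENNReal.ofReal (t ^ (κ i - 1 / 2)) := by
        gcongr with i
        refine le_trans (ENNReal.ofReal_le_ofReal ?_) (hC i _ _ (hx.1 i).le (by positivity))
        have h1 : (x i + r ^ 2) ^ κ i ≤ ((ε ^ 2)⁻¹) ^ |κ i| * (x i + (ε * r) ^ 2) ^ κ i := by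
          have hε2 : ε ^ 2 ≤ 1 := pow_le_one₀ hε0.le hε1
          have hε3 : 1 ≤ (ε ^ 2)⁻¹ := (one_le_inv₀ (by positivity)).2 hε2
          apply rpow_le_of_comparable _ hε3 (hxi i) (hxi' i)
          · rw [le_inv_mul_iff₀ (by positivity)]
            nlinarith [hx.1 i]
          · refine le_trans ?_ (le_mul_of_one_le_left (hxi i).le hε3)
            nlinarith [sq_nonneg r]
        rw [← inv_mul_le_iff₀ (by positivity)] at h1
        have hCi := hC0 i
        calc D i * (r * (x i + r ^ 2) ^ κ i)
            = C i * (ε * r * ((((ε ^ 2)⁻¹) ^ |κ i|)⁻¹ * (x i + r ^ 2) ^ κ i)) := by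
              simp only [D]
              ring
          _ ≤ _ := by gcongr
    _ = ∫⁻ y : Fin m → ℝ, ENNReal.ofReal K⁻¹ * ∏ i, g i (y i) := by
        rw [lintegral_const_mul' _ _ ENNReal.ofReal_ne_top, lintegral_fin_prod g hg]
        simp only [g, lintegral_indicator (measurableSet_sqrtInterval _ _)]
    _ ≤ ∫⁻ y in simplexBall x r, ENNReal.ofReal
        ((∏ i, (y i) ^ (κ i - 1 / 2)) * (1 - ∑ i, y i) ^ (κlast - 1 / 2)) := by
        rw [← lintegral_indicator hBm]
        refine lintegral_mono fun y => ?_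
        by_cases hy : ∀ i, y i ∈ sqrtInterval (x i) (ε * r)
        · obtain ⟨hyB, hyl⟩ := mem_simplexBall_of_forall_mem_sqrtInterval hx hxl hr hr1 hy
          have hy0 := hyB.1
          have h1 : ∏ i, g i (y i) = ENNReal.ofReal (∏ i, (y i) ^ (κ i - 1 / 2)) := by
            rw [ENNReal.ofReal_prod_of_nonneg fun i _ => Real.rpow_nonneg (hy0.1 i).le _]
            exact Finset.prod_congr rfl fun i _ => indicator_of_mem (hy i) _
          rw [indicator_of_mem hyB, h1, ← ENNReal.ofReal_mul (by positivity), mul_comm]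
          apply ENNReal.ofReal_le_ofReal
          apply mul_le_mul_of_nonneg_left _
            (Finset.prod_nonneg fun i _ => Real.rpow_nonneg (hy0.1 i).le _)
          have hs : 0 ≤ ∑ i, y i := Finset.sum_nonneg fun i _ => (hy0.1 i).le
          have := rpow_le_of_comparable (A := 2 * (m + 1)) (κlast - 1 / 2) (by linarith) one_pos
            (show 0 < 1 - ∑ i, y i by linarith [hy0.2])
            (by rwa [div_le_iff₀' (by positivity)] at hyl) (by linarith)
          rw [Real.one_rpow] at this
          rw [inv_le_iff_one_le_mul₀' hK0]
          exact this
        · push Not at hy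
          obtain ⟨i, hi⟩ := hy
          rw [Finset.prod_eq_zero (Finset.mem_univ i) (indicator_of_notMem hi _), mul_zero]
          exact zero_le

/-! ### Reduction to a large last coordinate -/

/-- Some barycentric coordinate is at least the average `1 / (m + 1)`. -/
lemma exists_large_coord {m : ℕ} (y : Fin m → ℝ) :
    1 / (m + 1 : ℝ) ≤ 1 - ∑ i, y i ∨ ∃ j, 1 / (m + 1 : ℝ) ≤ y j := by
  by_contra! h
  have h1 : ∑ i, y i ≤ ∑ _i : Fin m, 1 / (m + 1 : ℝ) :=
    Finset.sum_le_sum fun i _ => (h.2 i).le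
  have h2 : ∑ _i : Fin m, 1 / (m + 1 : ℝ) + 1 / (m + 1 : ℝ) = 1 := by
    simp
    field_simp
  linarith [h.1]

/-- The ball is covered by the `m + 1` pieces on which a given coordinate is at least
`1 / (m + 1)`; exchanging coordinates reduces each to `measure_inter_le`. -/
lemma exists_const_le {m : ℕ} (κ : Fin m → ℝ) (κlast : ℝ) (hκ : ∀ i, -1 / 2 < κ i)
    (hκlast : -1 / 2 < κlast) :
    ∃ C : ℝ, 0 < C ∧ ∀ x ∈ openSimplex m, ∀ r : ℝ, 0 < r → r ≤ 1 →
      weightedSimplexMeasure m κ κlast (simplexBall x r) ≤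
        ENNReal.ofReal (C * ballSize κ κlast x r) := by
  have hκ' : ∀ j i, -1 / 2 < Function.update κ j κlast i := fun j i => by
    by_cases h : i = j
    · subst h
      simpa using hκlast
    · simpa [h] using hκ i
  obtain ⟨C₀, hC₀, hC⟩ := measure_inter_le κ κlast hκ
  choose C' hC'0 hC' using fun j => measure_inter_le (Function.update κ j κlast) (κ j) (hκ' j)
  refine ⟨C₀ + ∑ j, C' j, add_pos_of_pos_of_nonneg hC₀
    (Finset.sum_nonneg fun j _ => (hC'0 j).le), fun x hx r hr hr1 => ?_⟩
  have hB := measurableSet_simplexBall x r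
  have hcover : simplexBall x r ⊆ (simplexBall x r ∩ {y | 1 / (m + 1 : ℝ) ≤ 1 - ∑ i, y i}) ∪
      ⋃ j, simplexBall x r ∩ {y | 1 / (m + 1 : ℝ) ≤ y j} := fun y hy => by
    rcases exists_large_coord y with h | ⟨j, h⟩
    · exact Or.inl ⟨hy, h⟩
    · exact Or.inr (mem_iUnion.2 ⟨j, hy, h⟩)
  have hj : ∀ j, weightedSimplexMeasure m κ κlast
      (simplexBall x r ∩ {y | 1 / (m + 1 : ℝ) ≤ y j}) ≤
        ENNReal.ofReal (C' j * ballSize κ κlast x r) := fun j => by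
    rw [weightedSimplexMeasure_swapLast κ κlast j
      (hB.inter (measurableSet_le measurable_const (by fun_prop))) (fun y hy => hy.1.1),
      preimage_inter, preimage_swapLast_simplexBall j hx, ← ballSize_swapLast κ κlast j]
    simp only [preimage_ofPred_eq, swapLast_same]
    exact hC' j _ (swapLast_mem j hx) r hr hr1
  have hpos := (ballSize_pos κ κlast hx hr).le
  calc _ ≤ _ := measure_mono hcover
    _ ≤ _ := measure_union_le _ _
    _ ≤ ENNReal.ofReal (C₀ * ballSize κ κlast x r) +
          ∑ j, ENNReal.ofReal (C' j * ballSize κ κlast x r) := by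
        refine add_le_add (hC x hx r hr hr1) ((measure_iUnion_fintype_le _ _).trans ?_)
        exact Finset.sum_le_sum fun j _ => hj j
    _ = _ := by
        have h1 : ∀ j, 0 ≤ C' j * ballSize κ κlast x r := fun j => mul_nonneg (hC'0 j).le hpos
        rw [← ENNReal.ofReal_sum_of_nonneg fun j _ => h1 j, ← ENNReal.ofReal_add
          (by positivity) (Finset.sum_nonneg fun j _ => h1 j), add_mul, Finset.sum_mul]

/-- Some coordinate of the centre is at least `1 / (m + 1)`; exchanging it with the last one
reduces the bound to `le_measure_simplexBall`. -/
lemma exists_const_ge {m : ℕ} (κ : Fin m → ℝ) (κlast : ℝ) :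
    ∃ C : ℝ, 0 < C ∧ ∀ x ∈ openSimplex m, ∀ r : ℝ, 0 < r → r ≤ 1 →
      ENNReal.ofReal (C⁻¹ * ballSize κ κlast x r) ≤
        weightedSimplexMeasure m κ κlast (simplexBall x r) := by
  obtain ⟨c₀, hc₀, hc⟩ := le_measure_simplexBall κ κlast
  choose c' hc'0 hc' using fun j => le_measure_simplexBall (Function.update κ j κlast) (κ j)
  have hs : 0 ≤ ∑ j, (c' j)⁻¹ := Finset.sum_nonneg fun j _ => (inv_pos.2 (hc'0 j)).le
  have hi := inv_pos.2 hc₀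
  refine ⟨c₀⁻¹ + ∑ j, (c' j)⁻¹, by positivity, fun x hx r hr hr1 => ?_⟩
  have hpos := (ballSize_pos κ κlast hx hr).le
  rcases exists_large_coord x with h | ⟨j, h⟩
  · refine le_trans (ENNReal.ofReal_le_ofReal ?_) (hc x hx h r hr hr1)
    gcongr
    exact inv_le_of_inv_le₀ hc₀ (by linarith)
  · rw [weightedSimplexMeasure_swapLast κ κlast j (measurableSet_simplexBall x r)
      (fun y hy => hy.1), preimage_swapLast_simplexBall j hx]
    rw [← one_sub_sum_swapLast j x] at h
    refine le_trans (ENNReal.ofReal_le_ofReal ?_) (hc' j _ (swapLast_mem j hx) h r hr hr1)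
    rw [ballSize_swapLast]
    gcongr
    have := Finset.single_le_sum (f := fun j => (c' j)⁻¹)
      (fun j _ => (inv_pos.2 (hc'0 j)).le) (Finset.mem_univ j)
    exact inv_le_of_inv_le₀ (hc'0 j) (by linarith)

/-- On the open simplex `T^m` with `κ₁,…,κ_{m+1} > -1/2`, the measure
`dμ = ∏ᵢ xᵢ^{κᵢ-1/2} (1-|x|)^{κ_{m+1}-1/2} dx` and the distance `ρ` above, there is a
constant `c > 1` depending only on `m` and `κ₁,…,κ_{m+1}` with
`c⁻¹ r^m (1-|x|+r²)^{κ_{m+1}} ∏ᵢ (xᵢ+r²)^{κᵢ} ≤ μ(B(x,r)) ≤ c r^m (1-|x|+r²)^{κ_{m+1}} ∏ᵢ (xᵢ+r²)^{κᵢ}`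
for all `x ∈ T^m` and all `0 < r ≤ 1`. -/
theorem weighted_simplex_ball_measure (m : ℕ) (hm : 1 ≤ m)
    (κ : Fin m → ℝ) (κlast : ℝ) (hκ : ∀ i, -1 / 2 < κ i) (hκlast : -1 / 2 < κlast) :
    ∃ c : ℝ, 1 < c ∧
      ∀ x ∈ openSimplex m, ∀ r : ℝ, 0 < r → r ≤ 1 →
        ENNReal.ofReal (c⁻¹ * r ^ m * (1 - ∑ i, x i + r ^ 2) ^ κlast *
            ∏ i, (x i + r ^ 2) ^ (κ i)) ≤
            weightedSimplexMeasure m κ κlast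
              {y ∈ openSimplex m | simplexDist x y < r} ∧
          weightedSimplexMeasure m κ κlast
              {y ∈ openSimplex m | simplexDist x y < r} ≤
            ENNReal.ofReal (c * r ^ m * (1 - ∑ i, x i + r ^ 2) ^ κlast *
              ∏ i, (x i + r ^ 2) ^ (κ i)) := by
  obtain ⟨C, hC0, hC⟩ := exists_const_le κ κlast hκ hκlast
  obtain ⟨D, hD0, hD⟩ := exists_const_ge κ κlast
  refine ⟨1 + C + D, by linarith, fun x hx r hr hr1 => ?_⟩
  have hpos := (ballSize_pos κ κlast hx hr).le
  have e : ∀ c : ℝ, c * r ^ m * (1 - ∑ i, x i + r ^ 2) ^ κlast * ∏ i, (x i + r ^ 2) ^ (κ i) =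
      c * ballSize κ κlast x r := fun c => by
    unfold ballSize
    ring
  rw [e, e]
  constructor
  · refine le_trans (ENNReal.ofReal_le_ofReal ?_) (hD x hx r hr hr1)
    gcongr
    linarith
  · refine (hC x hx r hr hr1).trans (ENNReal.ofReal_le_ofReal ?_)
    gcongr
    linarith
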